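/- Let 1 < p < q < p*. For every open bounded convex set Ω ⊂ ℝ^N and every open ball B ⊂ ℝ^N one has the strict inequality μ_{p,q}(Ω) < λ_p(B) · |Ω|^{1 − p/q} · (diam(B)/diam(Ω))^p. -/

import Mathlib

open MeasureTheory Metric Set Real

noncomputable section

/-- The Rayleigh quotient `(∫_Ω |∇v|^p) / (∫_Ω |v|^q)^(p/q)`, where the gradient is
understood as the (a.e. defined) Fréchet derivative. -/
def rayleighQuot {N : ℕ} (p q : ℝ) (Ω : Set (EuclideanSpace ℝ (Fin N)))
    (v : EuclideanSpace ℝ (Fin N) → ℝ) : ℝ :=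
  (∫ x in Ω, ‖fderiv ℝ v x‖ ^ p) / (∫ x in Ω, |v x| ^ q) ^ (p / q)

/-- The first (generalized) Dirichlet eigenvalue `λ_{p,q}(Ω)`: infimum of the Rayleigh
quotient over nontrivial smooth functions compactly supported in `Ω`. -/
def lambdaPQ {N : ℕ} (p q : ℝ) (Ω : Set (EuclideanSpace ℝ (Fin N))) : ℝ :=
  sInf { R : ℝ | ∃ v : EuclideanSpace ℝ (Fin N) → ℝ,
    ContDiff ℝ (⊤ : ℕ∞) v ∧ HasCompactSupport v ∧ tsupport v ⊆ Ω ∧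
    (∃ x ∈ Ω, v x ≠ 0) ∧ R = rayleighQuot p q Ω v }

/-- The first nontrivial (generalized) Neumann eigenvalue `μ_{p,q}(Ω)`: infimum of the
Rayleigh quotient over nontrivial Lipschitz functions on the closure of `Ω` satisfying
the constraint `∫_Ω |v|^(q-2) v = 0`. -/
def muPQ {N : ℕ} (p q : ℝ) (Ω : Set (EuclideanSpace ℝ (Fin N))) : ℝ :=
  sInf { R : ℝ | ∃ v : EuclideanSpace ℝ (Fin N) → ℝ, ∃ K : NNReal,
    LipschitzOnWith K v (closure Ω) ∧ (∃ x ∈ Ω, v x ≠ 0) ∧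
    (∫ x in Ω, |v x| ^ (q - 2) * v x) = 0 ∧ R = rayleighQuot p q Ω v }

/-- `q` is below the critical Sobolev exponent `p* = Np/(N-p)` (with `p* = ∞` if `p ≥ N`). -/
def ltCritical (N : ℕ) (p q : ℝ) : Prop := p < N → q < N * p / (N - p)

end

open scoped ENNReal NNReal Topology

abbrev EE (N : ℕ) := EuclideanSpace ℝ (Fin N)

theorem EE_nontrivial {N : ℕ} (hN : 2 ≤ N) : Nontrivial (EE N) := by
  have : Nonempty (Fin N) := ⟨⟨0, by omega⟩⟩
  infer_instance

theorem polar_lintegral {N : ℕ} [Nontrivial (EE N)] (f : EE N → ℝ≥0∞) (hf : Measurable f) :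
    ∫⁻ x, f x = ∫⁻ ω : sphere (0 : EE N) 1,
      ∫⁻ t in Ioi (0:ℝ), ENNReal.ofReal (t ^ (N - 1)) * f (t • (ω : EE N))
        ∂volume ∂((volume : Measure (EE N)).toSphere) := by
  have hd : Module.finrank ℝ (EE N) = N := by simp
  calc
    ∫⁻ x, f x = ∫⁻ x : ({(0)}ᶜ : Set (EE N)), f x.1 ∂((volume : Measure (EE N)).comap (↑)) := by
      rw [lintegral_subtype_comap (measurableSet_singleton _).compl f, 
        restrict_compl_singleton]
    _ = ∫⁻ x, f ((x.2 : ℝ) • (x.1 : EE N)) ∂(volume : Measure (EE N)).toSphere.prod (.volumeIoiPow (N - 1)) := by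
      have := (volume : Measure (EE N)).measurePreserving_homeomorphUnitSphereProd.lintegral_comp
        (f := fun x => f ((x.2 : ℝ) • (x.1 : EE N))) (by fun_prop)
      rw [hd] at this
      rw [← this]
      refine lintegral_congr fun x => ?_
      congr 1
      have h0 : ‖(x : EE N)‖ ≠ 0 := norm_ne_zero_iff.2 x.2
      simp [homeomorphUnitSphereProd, smul_smul, h0]
    _ = _ := by
      rw [lintegral_prod _ (by fun_prop)]
      refine lintegral_congr fun ω => ?_
      rw [Measure.volumeIoiPow, lintegral_withDensity_eq_lintegral_mul _ (by fun_prop) (by fun_prop),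
        ← lintegral_subtype_comap measurableSet_Ioi]
      rfl

theorem radial_compare {N : ℕ} [Nontrivial (EE N)] (a b : ℝ → ℝ≥0∞) (ha : Measurable a)
    (hb : Measurable b)
    (hab : ∀ ρ : ℝ, 0 < ρ → ∫⁻ t in Ioo 0 ρ, ENNReal.ofReal (t ^ (N - 1)) * a t ≤
      ∫⁻ t in Ioo 0 ρ, ENNReal.ofReal (t ^ (N - 1)) * b t)
    (Ω : Set (EE N)) (hΩo : IsOpen Ω) (hΩb : Bornology.IsBounded Ω) (hΩc : Convex ℝ Ω)
    (x₀ : EE N) (hx₀ : x₀ ∈ closure Ω) :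
    ∫⁻ x in Ω, a ‖x - x₀‖ ≤ ∫⁻ x in Ω, b ‖x - x₀‖ := by
  have key : ∀ c : ℝ → ℝ≥0∞, Measurable c → ∫⁻ x in Ω, c ‖x - x₀‖ =
      ∫⁻ ω : sphere (0 : EE N) 1,
      ∫⁻ t in {t : ℝ | 0 < t ∧ x₀ + t • (ω : EE N) ∈ Ω}, ENNReal.ofReal (t ^ (N - 1)) * c t
        ∂volume ∂((volume : Measure (EE N)).toSphere) := by
    intro c hc
    rw [← lintegral_indicator hΩo.measurableSet,
      ← lintegral_add_left_eq_self (fun x => Ω.indicator (fun x => c ‖x - x₀‖) x) x₀,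
      polar_lintegral]
    · refine lintegral_congr fun ω => ?_
      have hm : MeasurableSet {t : ℝ | x₀ + t • (ω : EE N) ∈ Ω} :=
        (hΩo.preimage (f := fun t : ℝ => x₀ + t • (ω : EE N)) (by fun_prop)).measurableSet
      have : {t : ℝ | 0 < t ∧ x₀ + t • (ω : EE N) ∈ Ω} = {t : ℝ | x₀ + t • (ω : EE N) ∈ Ω} ∩ Ioi 0 := by
        ext t; simp [and_comm]
      rw [this, ← Measure.restrict_restrict hm, ← lintegral_indicator hm]
      refine setLIntegral_congr_fun measurableSet_Ioi fun t ht => ?_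
      have hn : ‖(ω : EE N)‖ = 1 := by simp
      have ht' : |t| = t := abs_of_pos ht
      by_cases h : x₀ + t • (ω : EE N) ∈ Ω
      · simp [indicator, h, norm_smul, ht']
      · simp [indicator, h]
    · refine Measurable.comp (Measurable.indicator (by fun_prop) hΩo.measurableSet) (by fun_prop)
  rw [key a ha, key b hb]
  refine lintegral_mono fun ω => ?_
  set J := {t : ℝ | 0 < t ∧ x₀ + t • (ω : EE N) ∈ Ω} with hJ
  rcases J.eq_empty_or_nonempty with h0 | hne
  · simp [h0]
  have hJo : IsOpen J := by
    have := (hΩo.preimage (f := fun t : ℝ => x₀ + t • (ω : EE N)) (by fun_prop))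
    exact (isOpen_Ioi (a := (0:ℝ))).inter this
  have hn : ‖(ω : EE N)‖ = 1 := by simp
  have hJb : BddAbove J := by
    obtain ⟨C, hC⟩ := hΩb.exists_norm_le
    refine ⟨C + ‖x₀‖, fun t ht => ?_⟩
    have h1 := hC _ ht.2
    have h2 : ‖t • (ω : EE N)‖ = t := by rw [norm_smul, hn, Real.norm_of_nonneg ht.1.le, mul_one]
    have h3 : ‖t • (ω : EE N)‖ ≤ ‖x₀ + t • (ω : EE N)‖ + ‖x₀‖ := by
      have := norm_sub_le (x₀ + t • (ω : EE N)) x₀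
      simpa using this
    linarith
  have hdown : ∀ t ∈ J, ∀ s, 0 < s → s < t → s ∈ J := by
    intro t ht s hs hst
    refine ⟨hs, ?_⟩
    have := hΩc.openSegment_closure_interior_subset_interior hx₀ (y := x₀ + t • (ω : EE N))
      (by rw [hΩo.interior_eq]; exact ht.2)
    rw [hΩo.interior_eq] at this
    apply this
    refine ⟨1 - s / t, s / t, ?_, ?_, by ring, ?_⟩
    · have : s / t < 1 := (div_lt_one ht.1).2 hst
      linarith
    · exact div_pos hs ht.1
    · rw [smul_add, smul_smul, div_mul_cancel₀ _ ht.1.ne', ← add_assoc, ← add_smul]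
      simp
  have hJeq : J = Ioo 0 (sSup J) := by
    ext t
    constructor
    · intro ht
      refine ⟨ht.1, ?_⟩
      obtain ⟨ε, hε, hb⟩ := Metric.isOpen_iff.1 hJo t ht
      have : t + ε / 2 ∈ J := hb (by simp [abs_of_pos hε, hε])
      have := le_csSup hJb this
      linarith
    · rintro ⟨h1, h2⟩
      obtain ⟨s, hs, hts⟩ := exists_lt_of_lt_csSup hne h2
      exact hdown s hs t h1 hts
  have hpos : 0 < sSup J := by
    obtain ⟨t, ht⟩ := hne
    exact ht.1.trans_le (le_csSup hJb ht)
  rw [hJeq]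
  exact hab _ hpos

theorem young_simple {a b ε p : ℝ} (hp : 1 < p) (ha : 0 ≤ a) (hb : 0 ≤ b) (hε : 0 < ε) :
    a ^ (p - 1) * b ≤ ε * a ^ p + ε⁻¹ ^ (p - 1) * b ^ p := by
  have e1 : ∀ x : ℝ, 0 ≤ x → x ^ p = x ^ (p - 1) * x := by
    intro x hx
    rw [← Real.rpow_add_one' hx (by linarith)]; simp
  rcases le_total b (ε * a) with h | h
  · have h1 : a ^ (p - 1) * b ≤ a ^ (p - 1) * (ε * a) := by gcongr
    have h2 : 0 ≤ ε⁻¹ ^ (p - 1) * b ^ p := by positivity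
    rw [e1 a ha]; nlinarith
  · have h1 : a ≤ ε⁻¹ * b := by
      rw [le_inv_mul_iff₀ hε]; exact h
    have h2 : a ^ (p - 1) ≤ (ε⁻¹ * b) ^ (p - 1) := Real.rpow_le_rpow ha h1 (by linarith)
    rw [Real.mul_rpow (by positivity) hb] at h2
    have h3 : 0 ≤ ε * a ^ p := by positivity
    rw [e1 b hb]
    nlinarith [mul_le_mul_of_nonneg_right h2 hb]

theorem poincare {N : ℕ} (hN : 2 ≤ N) {p : ℝ} (hp : 1 < p) (c : EE N) (r : ℝ) :
    ∃ C : ℝ, 0 < C ∧ ∀ v : EE N → ℝ, ContDiff ℝ 1 v → HasCompactSupport v →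
      tsupport v ⊆ ball c r → ∫ x, |v x| ^ p ≤ C * ∫ x, ‖fderiv ℝ v x‖ ^ p := by
  set K : ℝ≥0 := eLpNormLESNormFDerivOfLeConst ℝ (volume : Measure (EE N)) (ball c r) 1 1 with hK
  set ε : ℝ := (2 * (K + 1) * p)⁻¹ with hε
  have hεp : 0 < ε := by positivity
  refine ⟨2 * (K + 1) * p * ε⁻¹ ^ (p - 1), by positivity, fun v hv hcs hsupp => ?_⟩
  have hcv : Continuous v := hv.continuous
  have hcf : Continuous (fderiv ℝ v) := hv.continuous_fderiv one_ne_zero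
  have hI1 : Integrable (fun x => |v x| ^ p) := by
    apply Continuous.integrable_of_hasCompactSupport
    · exact (hcv.abs).rpow_const fun x => Or.inr (by linarith)
    · refine hcs.comp_left (g := fun y : ℝ => |y| ^ p) ?_
      simp [Real.zero_rpow (by linarith : p ≠ 0)]
  have hI2 : Integrable (fun x => ‖fderiv ℝ v x‖ ^ p) := by
    apply Continuous.integrable_of_hasCompactSupport
    · exact (hcf.norm).rpow_const fun x => Or.inr (by linarith)
    · refine (hcs.fderiv (𝕜 := ℝ)).comp_left (g := fun y => ‖y‖ ^ p) ?_
      simp [Real.zero_rpow (by linarith : p ≠ 0)]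
  have hu : ContDiff ℝ 1 (fun x => ‖v x‖ ^ p) := hv.norm_rpow hp
  have hucs : HasCompactSupport (fun x => ‖v x‖ ^ p) := by
    refine hcs.comp_left (g := fun y : ℝ => ‖y‖ ^ p) ?_
    simp [Real.zero_rpow (by linarith : p ≠ 0)]
  have hI3 : Integrable (fderiv ℝ (fun x => ‖v x‖ ^ p)) :=
    (hu.continuous_fderiv one_ne_zero).integrable_of_hasCompactSupport (hucs.fderiv (𝕜 := ℝ))
  have hs : Function.support (fun x => ‖v x‖ ^ p) ⊆ ball c r := by
    refine Subset.trans ?_ hsupp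
    refine Subset.trans ?_ (subset_tsupport v)
    intro x hx h0
    apply hx
    simp [h0, Real.zero_rpow (by linarith : p ≠ 0)]
  have hS := eLpNorm_le_eLpNorm_fderiv (volume : Measure (EE N)) hu hs (p := 1) le_rfl
    (by simp; exact_mod_cast hN) isBounded_ball
  rw [← hK] at hS
  simp only [ENNReal.coe_one, eLpNorm_one_eq_lintegral_enorm] at hS
  have hS2 : ∫ x, |v x| ^ p ≤ K * ∫ x, ‖fderiv ℝ (fun x => ‖v x‖ ^ p) x‖ := by
    rw [← ofReal_integral_norm_eq_lintegral_enorm hI3,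
      ← ofReal_integral_norm_eq_lintegral_enorm (by simpa using hI1)] at hS
    rw [← ENNReal.ofReal_coe_nnreal, ← ENNReal.ofReal_mul (by positivity),
      ENNReal.ofReal_le_ofReal_iff (by positivity)] at hS
    refine le_trans (le_of_eq ?_) hS
    congr 1; ext x; simp [abs_of_nonneg (Real.rpow_nonneg (abs_nonneg (v x)) p)]
  have hS3 : ∫ x, ‖fderiv ℝ (fun x => ‖v x‖ ^ p) x‖ ≤
      ∫ x, (p * ε * |v x| ^ p + p * ε⁻¹ ^ (p - 1) * ‖fderiv ℝ v x‖ ^ p) := by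
    refine integral_mono hI3.norm ((hI1.const_mul _).add (hI2.const_mul _)) fun x => ?_
    have h1 := norm_fderiv_norm_rpow_le (hv.differentiable one_ne_zero) (x := x) hp
    have h2 := young_simple hp (norm_nonneg (v x)) (norm_nonneg (fderiv ℝ v x)) hεp
    rw [Real.norm_eq_abs] at h1 h2
    dsimp only
    nlinarith
  rw [integral_add (hI1.const_mul _) (hI2.const_mul _), integral_const_mul, integral_const_mul] at hS3
  set A := ∫ x, |v x| ^ p
  set B := ∫ x, ‖fderiv ℝ v x‖ ^ p
  have hA : 0 ≤ A := integral_nonneg fun x => by positivity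
  have hB : 0 ≤ B := integral_nonneg fun x => by positivity
  have h4 : A ≤ (K + 1) * (p * ε * A + p * ε⁻¹ ^ (p - 1) * B) := by
    refine hS2.trans ?_
    refine mul_le_mul (by simp) hS3 (integral_nonneg fun x => by positivity) (by positivity)
  have h5 : (K + 1) * (p * ε) = (1/2 : ℝ) := by
    rw [hε]; field_simp
  nlinarith

theorem lint_Ioc {f : ℝ → ℝ} (hf : Continuous f) {a b : ℝ} (hab : a ≤ b)
    (h0 : ∀ t ∈ Ioc a b, 0 ≤ f t) :
    ∫⁻ t in Ioc a b, ENNReal.ofReal (f t) = ENNReal.ofReal (∫ t in a..b, f t) := by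
  rw [intervalIntegral.integral_of_le hab]
  rw [ofReal_integral_eq_lintegral_ofReal]
  · exact (hf.intervalIntegrable a b).1
  · filter_upwards [ae_restrict_mem measurableSet_Ioc] with y hy using h0 y hy

theorem exists_profile {N : ℕ} [Nontrivial (EE N)] {p Λ R : ℝ} (hp : 1 < p) (hΛ : 0 ≤ Λ)
    (hR : 0 < R) (w : EE N → ℝ) (hw : ContDiff ℝ 1 w) (hcs : HasCompactSupport w)
    (hs : tsupport w ⊆ ball 0 R)
    (hlt : ∫ x, ‖fderiv ℝ w x‖ ^ p < Λ * ∫ x, |w x| ^ p) :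
    ∃ (φ ψ : ℝ → ℝ) (ρ₀ R' : ℝ) (L : ℝ≥0), R' < R ∧ LipschitzWith L φ ∧
      (∀ t, R' ≤ t → φ t = 0) ∧ (∃ t, 0 < t ∧ φ t ≠ 0) ∧ Measurable ψ ∧ (∀ t, 0 ≤ ψ t) ∧
      0 ≤ ρ₀ ∧
      (∀ t, t ≠ ρ₀ → ∃ d, HasDerivAt φ d t ∧ |d| ≤ ψ t) ∧
      ∀ ρ : ℝ, 0 < ρ →
        ∫⁻ t in Ioo 0 ρ, ENNReal.ofReal (t ^ (N - 1)) * ENNReal.ofReal (ψ t ^ p) ≤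
        ∫⁻ t in Ioo 0 ρ, ENNReal.ofReal (t ^ (N - 1)) * ENNReal.ofReal (Λ * |φ t| ^ p) := by
  have hp0 : p ≠ 0 := by linarith
  have hcw : Continuous w := hw.continuous
  have hcf : Continuous (fderiv ℝ w) := hw.continuous_fderiv one_ne_zero
  have hI1 : Integrable (fun x => |w x| ^ p) := by
    apply Continuous.integrable_of_hasCompactSupport
    · exact (hcw.abs).rpow_const fun x => Or.inr (by linarith)
    · refine hcs.comp_left (g := fun y : ℝ => |y| ^ p) ?_
      simp [Real.zero_rpow hp0]
  have hI2 : Integrable (fun x => ‖fderiv ℝ w x‖ ^ p) := by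
    apply Continuous.integrable_of_hasCompactSupport
    · exact (hcf.norm).rpow_const fun x => Or.inr (by linarith)
    · refine (hcs.fderiv (𝕜 := ℝ)).comp_left (g := fun y => ‖y‖ ^ p) ?_
      simp [Real.zero_rpow hp0]
  -- the support radius
  obtain ⟨R₁, hR₁, hs₁⟩ := exists_lt_subset_ball (isClosed_tsupport w) hs
  set R' := max R₁ 0 with hR'
  have hR'R : R' < R := max_lt hR₁ hR
  -- choose the direction
  have hlt2 : ∫⁻ x, ENNReal.ofReal (‖fderiv ℝ w x‖ ^ p) < ∫⁻ x, ENNReal.ofReal (Λ * |w x| ^ p) := by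
    rw [← ofReal_integral_eq_lintegral_ofReal hI2 (Filter.Eventually.of_forall fun x => by positivity),
      ← ofReal_integral_eq_lintegral_ofReal (hI1.const_mul Λ)
        (Filter.Eventually.of_forall fun x => by positivity), integral_const_mul]
    exact (ENNReal.ofReal_lt_ofReal_iff_of_nonneg (integral_nonneg fun x => by positivity)).2 hlt
  rw [polar_lintegral _ (by fun_prop), polar_lintegral _ (by fun_prop)] at hlt2
  obtain ⟨ω, hω⟩ : ∃ ω : sphere (0 : EE N) 1,
      ∫⁻ t in Ioi (0:ℝ), ENNReal.ofReal (t ^ (N - 1)) *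
        ENNReal.ofReal (‖fderiv ℝ w (t • (ω : EE N))‖ ^ p) <
      ∫⁻ t in Ioi (0:ℝ), ENNReal.ofReal (t ^ (N - 1)) *
        ENNReal.ofReal (Λ * |w (t • (ω : EE N))| ^ p) := by
    by_contra! hcon
    exact absurd hlt2 (not_lt.2 (lintegral_mono hcon))
  have hn : ‖(ω : EE N)‖ = 1 := by simp
  set g : ℝ → ℝ := fun t => w (t • (ω : EE N)) with hg
  set g' : ℝ → ℝ := fun t => fderiv ℝ w (t • (ω : EE N)) (ω : EE N) with hg'
  have hgd : ∀ t, HasDerivAt g (g' t) t := by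
    intro t
    have h1 : HasFDerivAt w (fderiv ℝ w (t • (ω : EE N))) (t • (ω : EE N)) :=
      ((hw.differentiable one_ne_zero) _).hasFDerivAt
    have h2 : HasDerivAt (fun t : ℝ => t • (ω : EE N)) (ω : EE N) t := by
      simpa using (hasDerivAt_id t).smul_const (ω : EE N)
    exact h1.comp_hasDerivAt t h2
  have hgc : Continuous g := by fun_prop
  have hg'c : Continuous g' := by
    have : Continuous fun t : ℝ => fderiv ℝ w (t • (ω : EE N)) := by fun_prop
    exact this.clm_apply continuous_const
  have hout : ∀ t, R' ≤ t → t • (ω : EE N) ∉ tsupport w := by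
    intro t ht hmem
    have := hs₁ hmem
    rw [mem_ball_zero_iff, norm_smul, hn, mul_one, Real.norm_eq_abs] at this
    have h3 := le_abs_self t
    have h4 := le_max_left R₁ 0
    linarith
  have hg0 : ∀ t, R' ≤ t → g t = 0 := fun t ht => image_eq_zero_of_notMem_tsupport (f := w) (hout t ht)
  have hg'0 : ∀ t, R' ≤ t → g' t = 0 := by
    intro t ht
    have : fderiv ℝ w (t • (ω : EE N)) = 0 := by
      by_contra hne
      exact hout t ht (support_fderiv_subset ℝ hne)
    simp [hg', this]
  set A : ℝ → ℝ := fun t => t ^ (N - 1) * |g' t| ^ p with hA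
  set B : ℝ → ℝ := fun t => t ^ (N - 1) * (Λ * |g t| ^ p) with hB
  have hAc : Continuous A :=
    (continuous_pow _).mul (hg'c.abs.rpow_const fun x => Or.inr (by linarith))
  have hBc : Continuous B :=
    (continuous_pow _).mul (continuous_const.mul (hgc.abs.rpow_const fun x => Or.inr (by linarith)))
  have hA0 : ∀ t, 0 ≤ t → 0 ≤ A t := fun t ht => by simp only [hA]; positivity
  have hB0 : ∀ t, 0 ≤ t → 0 ≤ B t := fun t ht => by simp only [hB]; positivity
  have hAof : ∀ t, 0 ≤ t → ENNReal.ofReal (t ^ (N - 1)) * ENNReal.ofReal (|g' t| ^ p) =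
      ENNReal.ofReal (A t) := fun t ht => by rw [hA, ENNReal.ofReal_mul (by positivity)]
  have hBof : ∀ t, 0 ≤ t → ENNReal.ofReal (t ^ (N - 1)) * ENNReal.ofReal (Λ * |g t| ^ p) =
      ENNReal.ofReal (B t) := fun t ht => (ENNReal.ofReal_mul (by positivity)).symm
  set h : ℝ → ℝ := fun ρ => ∫ t in (0:ℝ)..ρ, (A t - B t) with hh
  have hABi : ∀ a b, IntervalIntegrable (fun t => A t - B t) volume a b :=
    fun a b => (hAc.sub hBc).intervalIntegrable a b
  have hhc : Continuous h := intervalIntegral.continuous_primitive hABi 0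
  have hhd : ∀ a b, h b - h a = ∫ t in a..b, (A t - B t) := fun a b => by
    simp only [hh]
    rw [intervalIntegral.integral_interval_sub_left (hABi _ _) (hABi _ _)]
  have hhR : h R < 0 := by
    have h1 : ∫⁻ t in Ioc 0 R, ENNReal.ofReal (A t) < ∫⁻ t in Ioc 0 R, ENNReal.ofReal (B t) := by
      refine lt_of_le_of_lt ?_ (hω.trans_le ?_)
      · calc ∫⁻ t in Ioc 0 R, ENNReal.ofReal (A t) ≤ ∫⁻ t in Ioi 0, ENNReal.ofReal (A t) :=
            lintegral_mono_set Ioc_subset_Ioi_self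
          _ ≤ _ := by
            refine setLIntegral_mono' measurableSet_Ioi fun t ht => ?_
            rw [← hAof t (le_of_lt ht)]
            gcongr
            have := (fderiv ℝ w (t • (ω : EE N))).le_opNorm (ω : EE N)
            rwa [hn, mul_one, Real.norm_eq_abs] at this
      · rw [← lintegral_indicator measurableSet_Ioi, ← lintegral_indicator measurableSet_Ioc]
        refine lintegral_mono fun t => ?_
        by_cases ht : 0 < t
        · by_cases htR : t ≤ R
          · simp only [indicator, mem_Ioi, mem_Ioc, ht, htR, and_self, if_true]
            rw [← hBof t ht.le]
          · have := hg0 t (by linarith)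
            simp only [hg] at this
            simp [indicator, ht, this, Real.zero_rpow hp0]
        · simp [indicator, ht]
    rw [lint_Ioc hAc hR.le (fun t ht => hA0 t ht.1.le),
      lint_Ioc hBc hR.le (fun t ht => hB0 t ht.1.le)] at h1
    have h2 := (ENNReal.ofReal_lt_ofReal_iff_of_nonneg
      (intervalIntegral.integral_nonneg hR.le fun t ht => hA0 t ht.1)).1 h1
    simp only [hh]
    rw [intervalIntegral.integral_sub (hAc.intervalIntegrable _ _) (hBc.intervalIntegrable _ _)]
    linarith
  obtain ⟨ρ₀, hρ₀, hmax⟩ := isCompact_Icc.exists_isMaxOn (nonempty_Icc.2 hR.le) hhc.continuousOn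
  have h00 : h 0 = 0 := by simp [hh]
  have hhρ₀ : 0 ≤ h ρ₀ := by
    have := hmax (left_mem_Icc.2 hR.le)
    simpa [h00] using this
  have hmax2 : ∀ ρ, ρ₀ ≤ ρ → h ρ ≤ h ρ₀ := by
    intro ρ hρ
    rcases le_total ρ R with h1 | h1
    · exact hmax ⟨hρ₀.1.trans hρ, h1⟩
    · have h2 : h ρ - h R = 0 := by
        rw [hhd]
        rw [intervalIntegral.integral_congr (g := fun _ => (0:ℝ))]
        · simp
        · intro t ht
          rw [uIcc_of_le h1] at ht
          have : R' ≤ t := by linarith [ht.1]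
          simp [hA, hB, hg0 t this, hg'0 t this, Real.zero_rpow hp0]
      have h3 : h R ≤ h ρ₀ := hmax (right_mem_Icc.2 hR.le)
      linarith
  obtain ⟨L, hL⟩ := hw.lipschitzWith_of_hasCompactSupport hcs one_ne_zero
  have hgL : LipschitzWith L g := by
    refine LipschitzWith.of_dist_le_mul fun s t => ?_
    have := hL.dist_le_mul (s • (ω : EE N)) (t • (ω : EE N))
    rwa [dist_eq_norm (s • (ω : EE N)), ← sub_smul, norm_smul, hn, mul_one, ← dist_eq_norm] at this
  have hρR' : ∀ t, ρ₀ < t → max t ρ₀ = t := fun t ht => max_eq_left ht.le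
  refine ⟨fun t => g (max t ρ₀), fun t => if ρ₀ < t then |g' t| else 0, ρ₀, R', L * 1, hR'R,
    hgL.comp (LipschitzWith.id.max_const ρ₀), fun t ht => hg0 _ (ht.trans (le_max_left _ _)),
    ?_, ?_, ?_, hρ₀.1, ?_, ?_⟩
  · by_contra! hcon
    have h1 : 0 ≤ h R - h ρ₀ := by
      rw [hhd]
      refine intervalIntegral.integral_nonneg_of_ae_restrict hρ₀.2 ?_
      have : ∀ᵐ t : ℝ, t ≠ ρ₀ := by simp [ae_iff, measure_singleton]
      filter_upwards [ae_restrict_of_ae this, ae_restrict_mem measurableSet_Icc] with t h1 h2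
      have h3 : ρ₀ < t := lt_of_le_of_ne h2.1 (Ne.symm h1)
      have h4 : 0 < t := hρ₀.1.trans_lt h3
      have h5 := hcon t h4
      simp only [hρR' t h3] at h5
      have := hA0 t h4.le
      simpa [hB, h5, Real.zero_rpow hp0] using this
    linarith
  · exact Measurable.ite measurableSet_Ioi (hg'c.abs.measurable) measurable_const
  · intro t; dsimp only; split_ifs <;> positivity
  · intro t ht
    rcases lt_or_gt_of_ne ht with h1 | h1
    · refine ⟨0, ?_, by simp [h1.le.not_gt]⟩
      refine (hasDerivAt_const t (g ρ₀)).congr_of_eventuallyEq ?_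
      filter_upwards [Iio_mem_nhds h1] with s hs
      rw [max_eq_right (le_of_lt hs)]
    · refine ⟨g' t, ?_, by simp [h1]⟩
      refine (hgd t).congr_of_eventuallyEq ?_
      filter_upwards [Ioi_mem_nhds h1] with s hs
      rw [max_eq_left (le_of_lt hs)]
  · intro ρ hρ
    rcases le_or_gt ρ ρ₀ with h1 | h1
    · refine le_trans (le_of_eq ?_) (zero_le)
      rw [setLIntegral_congr_fun (g := fun _ => 0) measurableSet_Ioo]
      · simp
      · intro t ht
        have : ¬ ρ₀ < t := by linarith [ht.2]
        simp [this, Real.zero_rpow hp0]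
    · calc ∫⁻ t in Ioo 0 ρ, ENNReal.ofReal (t ^ (N - 1)) *
            ENNReal.ofReal ((if ρ₀ < t then |g' t| else 0) ^ p)
          ≤ ∫⁻ t in Ioc ρ₀ ρ, ENNReal.ofReal (A t) := by
            rw [← lintegral_indicator measurableSet_Ioo, ← lintegral_indicator measurableSet_Ioc]
            refine lintegral_mono fun t => ?_
            by_cases h2 : ρ₀ < t
            · by_cases h3 : t < ρ
              · have h4 : 0 < t := hρ₀.1.trans_lt h2
                simp only [indicator, mem_Ioo, mem_Ioc, h2, h3, h3.le, h4, and_self, if_true]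
                rw [hAof t h4.le]
              · simp [indicator, h3]
            · simp [indicator, h2, Real.zero_rpow hp0]
        _ ≤ ∫⁻ t in Ioc ρ₀ ρ, ENNReal.ofReal (B t) := by
            rw [lint_Ioc hAc h1.le (fun t ht => hA0 t (hρ₀.1.trans ht.1.le)),
              lint_Ioc hBc h1.le (fun t ht => hB0 t (hρ₀.1.trans ht.1.le))]
            apply ENNReal.ofReal_le_ofReal
            have h2 := hmax2 ρ h1.le
            have h3 := hhd ρ₀ ρ
            rw [intervalIntegral.integral_sub (hAc.intervalIntegrable _ _)
              (hBc.intervalIntegrable _ _)] at h3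
            linarith
        _ = ∫⁻ t in Ioo ρ₀ ρ, ENNReal.ofReal (B t) := by
            rw [Measure.restrict_congr_set Ioo_ae_eq_Ioc]
        _ ≤ _ := by
            refine le_trans (le_of_eq ?_) (lintegral_mono_set (Ioo_subset_Ioo_left hρ₀.1))
            refine setLIntegral_congr_fun measurableSet_Ioo fun t ht => ?_
            dsimp only
            rw [hρR' t ht.1, hBof t (hρ₀.1.trans ht.1.le)]

theorem radial_test {N : ℕ} [Nontrivial (EE N)] {p Λ : ℝ} (hp : 1 < p) (hΛ : 0 ≤ Λ)
    (φ ψ : ℝ → ℝ) (ρ₀ : ℝ) (L : ℝ≥0) (hL : LipschitzWith L φ)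
    (hψm : Measurable ψ)
    (hd : ∀ t, t ≠ ρ₀ → ∃ d, HasDerivAt φ d t ∧ |d| ≤ ψ t)
    (hab : ∀ ρ : ℝ, 0 < ρ →
        ∫⁻ t in Ioo 0 ρ, ENNReal.ofReal (t ^ (N - 1)) * ENNReal.ofReal (ψ t ^ p) ≤
        ∫⁻ t in Ioo 0 ρ, ENNReal.ofReal (t ^ (N - 1)) * ENNReal.ofReal (Λ * |φ t| ^ p))
    (Ω : Set (EE N)) (hΩo : IsOpen Ω) (hΩb : Bornology.IsBounded Ω) (hΩc : Convex ℝ Ω)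
    (x₀ : EE N) (hx₀ : x₀ ∈ closure Ω) :
    LipschitzWith L (fun x => φ ‖x - x₀‖) ∧
    IntegrableOn (fun x => ‖fderiv ℝ (fun x => φ ‖x - x₀‖) x‖ ^ p) Ω ∧
    ∫ x in Ω, ‖fderiv ℝ (fun x => φ ‖x - x₀‖) x‖ ^ p ≤ Λ * ∫ x in Ω, |φ ‖x - x₀‖| ^ p := by
  have hnl : LipschitzWith 1 (fun x : EE N => ‖x - x₀‖) := by
    simpa [dist_eq_norm] using LipschitzWith.dist_left x₀
  have huL : LipschitzWith L (fun x => φ ‖x - x₀‖) := by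
    have := hL.comp hnl
    rwa [mul_one] at this
  set u := fun x => φ ‖x - x₀‖ with hu
  have hvol : volume Ω ≠ ∞ := hΩb.measure_lt_top.ne
  have hI : IntegrableOn (fun x => ‖fderiv ℝ u x‖ ^ p) Ω := by
    refine Measure.integrableOn_of_bounded (M := (L:ℝ) ^ p) hvol
      ((measurable_fderiv ℝ u).norm.pow_const p).aestronglyMeasurable ?_
    refine Filter.Eventually.of_forall fun x => ?_
    rw [Real.norm_of_nonneg (by positivity)]
    exact Real.rpow_le_rpow (norm_nonneg _) (norm_fderiv_le_of_lipschitz ℝ huL) (by linarith)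
  have hcu : Continuous u := huL.continuous
  have hI2 : IntegrableOn (fun x => |u x| ^ p) Ω := by
    have : Continuous (fun x => |u x| ^ p) := hcu.abs.rpow_const fun x => Or.inr (by linarith)
    exact (this.continuousOn.integrableOn_compact hΩb.isCompact_closure).mono_set subset_closure
  refine ⟨huL, hI, ?_⟩
  have hae : ∀ᵐ x : EE N, ‖fderiv ℝ u x‖ ≤ ψ ‖x - x₀‖ := by
    have h1 : ∀ᵐ x : EE N, x ∉ sphere x₀ ρ₀ := measure_eq_zero_iff_ae_notMem.1 (Measure.addHaar_sphere _ _ _)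
    have h2 : ∀ᵐ x : EE N, x ∉ sphere x₀ 0 := measure_eq_zero_iff_ae_notMem.1 (Measure.addHaar_sphere _ _ _)
    filter_upwards [h1, h2] with x hx hx'
    rw [mem_sphere_iff_norm] at hx hx'
    obtain ⟨d, hd1, hd2⟩ := hd _ hx
    have h3 : DifferentiableAt ℝ (fun x : EE N => ‖x - x₀‖) x :=
      (differentiableAt_id.sub_const x₀).norm ℝ (by simpa using hx')
    have h4 := hd1.comp_hasFDerivAt x h3.hasFDerivAt
    have h5 : fderiv ℝ u x = d • fderiv ℝ (fun x : EE N => ‖x - x₀‖) x := h4.fderiv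
    rw [h5, norm_smul]
    have h6 : ‖fderiv ℝ (fun x : EE N => ‖x - x₀‖) x‖ ≤ 1 := by
      simpa using norm_fderiv_le_of_lipschitz ℝ hnl (x₀ := x)
    calc ‖d‖ * _ ≤ ‖d‖ * 1 := by gcongr
      _ ≤ _ := by simpa using hd2
  have h1 : ∫⁻ x in Ω, ENNReal.ofReal (‖fderiv ℝ u x‖ ^ p) ≤
      ∫⁻ x in Ω, ENNReal.ofReal (Λ * |u x| ^ p) := by
    calc _ ≤ ∫⁻ x in Ω, ENNReal.ofReal (ψ ‖x - x₀‖ ^ p) := by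
          refine lintegral_mono_ae ?_
          filter_upwards [ae_restrict_of_ae hae] with x hx
          gcongr
      _ ≤ _ := radial_compare (fun t => ENNReal.ofReal (ψ t ^ p))
          (fun t => ENNReal.ofReal (Λ * |φ t| ^ p)) (by fun_prop)
          (by have := hL.continuous.measurable; fun_prop) hab Ω hΩo hΩb hΩc x₀ hx₀
  rw [← ofReal_integral_eq_lintegral_ofReal hI (Filter.Eventually.of_forall fun x => by positivity),
    ← ofReal_integral_eq_lintegral_ofReal (hI2.const_mul Λ)
        (Filter.Eventually.of_forall fun x => by positivity), integral_const_mul,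
    ENNReal.ofReal_le_ofReal_iff (mul_nonneg hΛ (integral_nonneg fun x => by positivity))] at h1
  exact h1

theorem setInt_ball {N : ℕ} {p : ℝ} (hp : 1 < p) {c : EE N} {r : ℝ} (v : EE N → ℝ)
    (hs : tsupport v ⊆ ball c r) :
    (∫ x in ball c r, ‖fderiv ℝ v x‖ ^ p = ∫ x, ‖fderiv ℝ v x‖ ^ p) ∧
    (∫ x in ball c r, |v x| ^ p = ∫ x, |v x| ^ p) := by
  have hp0 : p ≠ 0 := by linarith
  constructor
  · refine setIntegral_eq_integral_of_forall_compl_eq_zero fun x hx => ?_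
    have : fderiv ℝ v x = 0 := by
      by_contra hne
      exact hx (hs (support_fderiv_subset ℝ hne))
    simp [this, Real.zero_rpow hp0]
  · refine setIntegral_eq_integral_of_forall_compl_eq_zero fun x hx => ?_
    have : v x = 0 := image_eq_zero_of_notMem_tsupport fun h => hx (hs h)
    simp [this, Real.zero_rpow hp0]

theorem int_pos {N : ℕ} {q : ℝ} (hq : 1 < q) {U : Set (EE N)} (hU : IsOpen U)
    (hUb : Bornology.IsBounded U) (v : EE N → ℝ) (hv : Continuous v) (hne : ∃ x ∈ U, v x ≠ 0) :
    IntegrableOn (fun x => |v x| ^ q) U ∧ 0 < ∫ x in U, |v x| ^ q := by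
  have hc : Continuous (fun x => |v x| ^ q) := hv.abs.rpow_const fun x => Or.inr (by linarith)
  have hI : IntegrableOn (fun x => |v x| ^ q) U :=
    (hc.continuousOn.integrableOn_compact hUb.isCompact_closure).mono_set subset_closure
  refine ⟨hI, ?_⟩
  rw [setIntegral_pos_iff_support_of_nonneg_ae (Filter.Eventually.of_forall fun x => by positivity) hI]
  obtain ⟨x, hx, hvx⟩ := hne
  refine IsOpen.measure_pos _ ?_ ⟨x, ?_, hx⟩
  · exact (hc.isOpen_support).inter hU
  · have : 0 < |v x| ^ q := Real.rpow_pos_of_pos (abs_pos.2 hvx) q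
    exact this.ne'

theorem lambda_pos {N : ℕ} (hN : 2 ≤ N) {p : ℝ} (hp : 1 < p) (c : EE N) {r : ℝ} (hr : 0 < r) :
    0 < lambdaPQ p p (ball c r) ∧ ∀ l, lambdaPQ p p (ball c r) < l →
      ∃ v : EE N → ℝ, ContDiff ℝ 1 v ∧ HasCompactSupport v ∧ tsupport v ⊆ ball c r ∧
      ∫ x, ‖fderiv ℝ v x‖ ^ p < l * ∫ x, |v x| ^ p := by
  have hp0 : p ≠ 0 := by linarith
  have hne : { R : ℝ | ∃ v : EE N → ℝ,
    ContDiff ℝ (⊤ : ℕ∞) v ∧ HasCompactSupport v ∧ tsupport v ⊆ ball c r ∧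
    (∃ x ∈ ball c r, v x ≠ 0) ∧ R = rayleighQuot p p (ball c r) v }.Nonempty := by
    let b : ContDiffBump c := ⟨r / 4, r / 2, by positivity, by linarith⟩
    refine ⟨_, b, b.contDiff, b.hasCompactSupport, ?_, ⟨c, by simpa, ?_⟩, rfl⟩
    · rw [b.tsupport_eq]
      exact closedBall_subset_ball (by simp only [b]; linarith)
    · have : b c = 1 := b.one_of_mem_closedBall (by simp [b.rIn_pos.le])
      simp [this]
  constructor
  · obtain ⟨C, hC, hpo⟩ := poincare hN hp c r
    refine lt_of_lt_of_le (inv_pos.2 hC) (le_csInf hne ?_)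
    rintro _ ⟨v, hv, hcs, hs, hne, rfl⟩
    have hv1 : ContDiff ℝ 1 v := hv.of_le (by exact_mod_cast le_top)
    have h1 := (int_pos hp isOpen_ball isBounded_ball v hv1.continuous hne).2
    have h2 := hpo v hv1 hcs hs
    rw [← (setInt_ball hp v hs).1, ← (setInt_ball hp v hs).2] at h2
    rw [rayleighQuot, div_self hp0, Real.rpow_one, le_div_iff₀ h1, inv_mul_le_iff₀ hC]
    exact h2
  · intro l hl
    obtain ⟨_, ⟨v, hv, hcs, hs, hne, rfl⟩, hlt⟩ := exists_lt_of_csInf_lt hne hl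
    have hv1 : ContDiff ℝ 1 v := hv.of_le (by exact_mod_cast le_top)
    have h1 := (int_pos hp isOpen_ball isBounded_ball v hv1.continuous hne).2
    refine ⟨v, hv1, hcs, hs, ?_⟩
    rw [rayleighQuot, div_self hp0, Real.rpow_one, div_lt_iff₀ h1] at hlt
    rwa [← (setInt_ball hp v hs).1, ← (setInt_ball hp v hs).2]

theorem scale_fun {N : ℕ} {p s l r : ℝ} (hs : 0 < s) (c : EE N)
    (v : EE N → ℝ) (hv : ContDiff ℝ 1 v)
    (hcs : HasCompactSupport v) (hsupp : tsupport v ⊆ ball c r)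
    (hlt : ∫ x, ‖fderiv ℝ v x‖ ^ p < l * ∫ x, |v x| ^ p) :
    ∃ w : EE N → ℝ, ContDiff ℝ 1 w ∧ HasCompactSupport w ∧ tsupport w ⊆ ball 0 (r / s) ∧
      ∫ x, ‖fderiv ℝ w x‖ ^ p < (l * s ^ p) * ∫ x, |w x| ^ p := by
  let e : EE N ≃ₜ EE N := (Homeomorph.smulOfNeZero s hs.ne').trans (Homeomorph.addLeft c)
  have he : ∀ x, e x = c + s • x := fun x => rfl
  have hts : tsupport (v ∘ e) = e ⁻¹' tsupport v := tsupport_comp_eq_preimage v e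
  refine ⟨v ∘ e, ?_, hcs.comp_homeomorph e, ?_, ?_⟩
  · refine hv.comp ?_
    change ContDiff ℝ 1 (fun x => c + s • x)
    fun_prop
  · rw [hts]
    intro x hx
    have := hsupp hx
    rw [he, mem_ball_iff_norm, add_sub_cancel_left, norm_smul, Real.norm_of_nonneg hs.le] at this
    rw [mem_ball_zero_iff, lt_div_iff₀ hs]
    linarith
  · have hfd : ∀ x, ‖fderiv ℝ (v ∘ e) x‖ ^ p = s ^ p * ‖fderiv ℝ v (c + s • x)‖ ^ p := by
      intro x
      have h1 : HasFDerivAt e (s • ContinuousLinearMap.id ℝ (EE N)) x := by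
        change HasFDerivAt (fun x => c + s • x) _ x
        exact ((hasFDerivAt_id x).const_smul s).const_add c
      have h2 := (((hv.differentiable one_ne_zero) (e x)).hasFDerivAt.comp x h1).fderiv
      rw [h2]
      simp only [ContinuousLinearMap.comp_smul, ContinuousLinearMap.comp_id, norm_smul, he]
      rw [Real.mul_rpow (norm_nonneg _) (norm_nonneg _), Real.norm_of_nonneg hs.le]
    have hint : ∀ f : EE N → ℝ, ∫ x, f (c + s • x) = |(s ^ N)⁻¹| * ∫ x, f x := by
      intro f
      have := Measure.integral_comp_smul (volume : Measure (EE N)) (fun x => f (c + x)) s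
      simp only [finrank_euclideanSpace, Fintype.card_fin, smul_eq_mul] at this
      rw [this, integral_add_left_eq_self f c]
    simp only [hfd, Function.comp, he]
    rw [integral_const_mul, hint (fun x => ‖fderiv ℝ v x‖ ^ p), hint (fun x => |v x| ^ p)]
    have h3 : 0 < s ^ p * |(s ^ N)⁻¹| := by positivity
    nlinarith [mul_lt_mul_of_pos_left hlt h3]

theorem exists_at_dist {N : ℕ} {Ω : Set (EE N)} (hΩc : Convex ℝ Ω) {x₀ x₁ : EE N}
    (h0 : x₀ ∈ closure Ω) (h1 : x₁ ∈ closure Ω) {t : ℝ} (ht : 0 < t) (htd : t < dist x₀ x₁) :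
    ∃ x ∈ Ω, ‖x - x₀‖ = t := by
  obtain ⟨a, ha, ha'⟩ := Metric.mem_closure_iff.1 h0 t ht
  obtain ⟨b, hb, hb'⟩ := Metric.mem_closure_iff.1 h1 (dist x₀ x₁ - t) (by linarith)
  have hc : ContinuousOn (fun x : EE N => ‖x - x₀‖) Ω := by fun_prop
  have := hΩc.isPreconnected.intermediate_value ha hb hc
  obtain ⟨x, hx, hxt⟩ := this (a := t) ⟨by rw [← dist_eq_norm, dist_comm]; exact ha'.le, by
    rw [← dist_eq_norm]
    have := dist_triangle x₀ b x₁
    rw [dist_comm x₁ b] at hb'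
    rw [dist_comm b x₀]
    linarith⟩
  exact ⟨x, hx, hxt⟩

theorem exists_diam {N : ℕ} [Nontrivial (EE N)] {Ω : Set (EE N)} (hΩo : IsOpen Ω)
    (hΩb : Bornology.IsBounded Ω) (hΩne : Ω.Nonempty) :
    0 < diam Ω ∧ ∃ x₀ ∈ closure Ω, ∃ x₁ ∈ closure Ω, dist x₀ x₁ = diam Ω := by
  constructor
  · suffices hnt : Ω.Nontrivial by
      obtain ⟨x, hx, y, hy, hxy⟩ := hnt
      exact (dist_pos.2 hxy).trans_le (dist_le_diam_of_mem hΩb hx hy)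
    obtain ⟨x, hx⟩ := hΩne
    by_contra hsub
    rw [not_nontrivial_iff] at hsub
    have h1 : Ω = {x} := hsub.eq_singleton_of_mem hx
    have h2 : 0 < volume Ω := hΩo.measure_pos _ ⟨x, hx⟩
    rw [h1] at h2
    simp at h2
  · have hK := hΩb.isCompact_closure
    obtain ⟨⟨a, b⟩, hab, hmax⟩ := (hK.prod hK).exists_isMaxOn
      (hΩne.closure.prod hΩne.closure) (f := fun z : EE N × EE N => dist z.1 z.2) (by fun_prop)
    refine ⟨a, hab.1, b, hab.2, ?_⟩
    apply le_antisymm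
    · rw [← Metric.diam_closure]
      exact dist_le_diam_of_mem hΩb.closure hab.1 hab.2
    · refine diam_le_of_forall_dist_le dist_nonneg fun x hx y hy => ?_
      exact isMaxOn_iff.1 hmax (x, y) ⟨subset_closure hx, subset_closure hy⟩

theorem vol_lt {N : ℕ} (hN : 2 ≤ N) {Ω : Set (EE N)} (hΩo : IsOpen Ω)
    (hΩb : Bornology.IsBounded Ω) (hΩc : Convex ℝ Ω) {x₀ x₁ : EE N}
    (h0 : x₀ ∈ closure Ω) (h1 : x₁ ∈ closure Ω) (hd : 0 < dist x₀ x₁) :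
    (volume (Ω ∩ (ball x₀ (dist x₀ x₁ / 2) ∪ ball x₁ (dist x₀ x₁ / 2)))).toReal <
      (volume Ω).toReal := by
  set d := dist x₀ x₁ with hdd
  -- an equidistant point
  obtain ⟨z, hz, hze⟩ : ∃ z ∈ Ω, dist z x₀ - dist z x₁ = 0 := by
    obtain ⟨a, ha, ha'⟩ := Metric.mem_closure_iff.1 h0 (d/2) (by linarith)
    obtain ⟨b, hb, hb'⟩ := Metric.mem_closure_iff.1 h1 (d/2) (by linarith)
    have hc : ContinuousOn (fun x : EE N => dist x x₀ - dist x x₁) Ω := by fun_prop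
    have t1 := dist_triangle x₀ a x₁
    have t2 := dist_triangle x₀ b x₁
    rw [dist_comm x₀ b, ] at t2
    rw [dist_comm x₁ b] at hb'
    have := hΩc.isPreconnected.intermediate_value ha hb hc
    obtain ⟨x, hx, hxt⟩ := this (a := 0) ⟨by
      change dist a x₀ - dist a x₁ ≤ 0
      rw [dist_comm a x₀]; linarith, by
      change 0 ≤ dist b x₀ - dist b x₁
      linarith⟩
    exact ⟨x, hx, hxt⟩
  -- an equidistant point away from the midpoint
  obtain ⟨y, hy, hye, hym⟩ : ∃ y ∈ Ω, dist y x₀ = dist y x₁ ∧ y ≠ midpoint ℝ x₀ x₁ := by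
    by_cases hzm : z = midpoint ℝ x₀ x₁
    · have hx : x₁ - x₀ ≠ 0 := by
        intro h
        rw [hdd, dist_comm, dist_eq_norm, h] at hd
        simp at hd
      have : Fact (Module.finrank ℝ (EE N) = (N - 1) + 1) := ⟨by simp; omega⟩
      have hf := Submodule.finrank_orthogonal_span_singleton (𝕜 := ℝ) (n := N - 1) hx
      have : 0 < Module.finrank ℝ (Submodule.span ℝ {x₁ - x₀})ᗮ := by rw [hf]; omega
      have := Module.finrank_pos_iff.1 this
      obtain ⟨⟨e, he⟩, hne⟩ := exists_ne (0 : (Submodule.span ℝ {x₁ - x₀})ᗮ)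
      have hne' : e ≠ 0 := fun h => hne (by simpa using h)
      rw [Submodule.mem_orthogonal_singleton_iff_inner_right] at he
      have hcont : Continuous (fun t : ℝ => z + t • e) := by fun_prop
      have hop := hΩo.preimage hcont
      obtain ⟨ε, hε, hball⟩ := Metric.isOpen_iff.1 hop 0 (by simpa using hz)
      have hmem : z + (ε / 2) • e ∈ Ω := hball (by simp [abs_of_pos hε, hε])
      refine ⟨_, hmem, ?_, ?_⟩
      · rw [dist_eq_norm, dist_eq_norm]
        have e1 : z + (ε / 2) • e - x₀ = (ε/2) • e + (1/2 : ℝ) • (x₁ - x₀) := by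
          rw [hzm, midpoint_eq_smul_add]; simp only [invOf_eq_inv]; module
        have e2 : z + (ε / 2) • e - x₁ = (ε/2) • e - (1/2 : ℝ) • (x₁ - x₀) := by
          rw [hzm, midpoint_eq_smul_add]; simp only [invOf_eq_inv]; module
        rw [e1, e2]
        rw [← sq_eq_sq₀ (norm_nonneg _) (norm_nonneg _), norm_add_sq_real, norm_sub_sq_real]
        have : inner ℝ ((ε/2) • e) ((1/2 : ℝ) • (x₁ - x₀)) = 0 := by
          rw [inner_smul_left, inner_smul_right, real_inner_comm, he]; simp
        rw [this]; ring
      · rw [← hzm]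
        intro h
        rw [add_eq_left, smul_eq_zero] at h
        rcases h with h | h
        · linarith
        · exact hne' h
    · exact ⟨z, hz, by linarith, hzm⟩
  have hyd : d / 2 < dist y x₀ := by
    by_contra! hle
    have t1 := dist_triangle x₀ y x₁
    rw [dist_comm x₀ y] at t1
    apply hym
    apply eq_midpoint_of_dist_eq_half
    · rw [dist_comm x₀ y]; linarith
    · linarith
  have hyd1 : d / 2 < dist y x₁ := hye ▸ hyd
  have hfin : volume Ω ≠ ∞ := hΩb.measure_lt_top.ne
  rw [ENNReal.toReal_lt_toReal (measure_ne_top_of_subset inter_subset_left hfin) hfin]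
  set S := ball x₀ (d / 2) ∪ ball x₁ (d / 2) with hS
  have hSm : MeasurableSet S := measurableSet_ball.union measurableSet_ball
  rw [← measure_inter_add_sdiff Ω hSm]
  refine ENNReal.lt_add_right (measure_ne_top_of_subset inter_subset_left hfin) ?_
  have hpos : 0 < volume (Ω ∩ ((closedBall x₀ (d/2))ᶜ ∩ (closedBall x₁ (d/2))ᶜ)) := by
    refine IsOpen.measure_pos _ ?_ ⟨y, hy, ?_, ?_⟩
    · exact hΩo.inter (isClosed_closedBall.isOpen_compl.inter isClosed_closedBall.isOpen_compl)
    · simpa using hyd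
    · simpa using hyd1
  refine (hpos.trans_le (measure_mono ?_)).ne'
  rintro x ⟨hx, ha, hb⟩
  refine ⟨hx, ?_⟩
  rintro (h | h)
  · exact ha (ball_subset_closedBall h)
  · exact hb (ball_subset_closedBall h)

theorem F_mul (q s t : ℝ) : |s * t| ^ (q - 2) * (s * t) =
    (|s| ^ (q - 2) * s) * (|t| ^ (q - 2) * t) := by
  rw [abs_mul, Real.mul_rpow (abs_nonneg _) (abs_nonneg _)]; ring

theorem choose_coeffs {q : ℝ} (hq : 1 < q) (a b : ℝ) : ∃ α β : ℝ, (α ≠ 0 ∨ β ≠ 0) ∧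
    (|α| ^ (q - 2) * α) * a + (|β| ^ (q - 2) * β) * b = 0 := by
  by_cases hb : b = 0
  · exact ⟨0, 1, Or.inr one_ne_zero, by simp [hb]⟩
  have hsurj : ∀ y : ℝ, 0 ≤ y → ∃ β : ℝ, |β| ^ (q - 2) * β = y := by
    intro y hy
    refine ⟨y ^ (1 / (q - 1)), ?_⟩
    have h0 : 0 ≤ y ^ (1 / (q - 1)) := by positivity
    rw [abs_of_nonneg h0, ← Real.rpow_add_one' h0 (by linarith), ← Real.rpow_mul hy]
    have : 1 / (q - 1) * (q - 2 + 1) = 1 := by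
      have : q - 1 ≠ 0 := by linarith
      field_simp; ring
    rw [this, Real.rpow_one]
  obtain ⟨β, hβ⟩ : ∃ β : ℝ, |β| ^ (q - 2) * β = -a / b := by
    rcases le_total 0 (-a / b) with h | h
    · exact hsurj _ h
    · obtain ⟨β, hβ⟩ := hsurj (-(-a/b)) (by linarith)
      refine ⟨-β, ?_⟩
      rw [abs_neg]; linarith
  refine ⟨1, β, Or.inl one_ne_zero, ?_⟩
  rw [hβ]
  simp; field_simp; ring

theorem holder_T {N : ℕ} {p q : ℝ} (hp : 1 < p) (hpq : p < q) {Ω S : Set (EE N)}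
    (hΩo : IsOpen Ω) (hSm : MeasurableSet S)
    (hΩb : Bornology.IsBounded Ω) (v : EE N → ℝ) (hv : Continuous v)
    (h0 : ∀ x, x ∉ S → v x = 0) :
    ∫ x in Ω, |v x| ^ p ≤ (volume (Ω ∩ S)).toReal ^ (1 - p / q) *
      (∫ x in Ω, |v x| ^ q) ^ (p / q) := by
  have hp0 : p ≠ 0 := by linarith
  have hq0 : q ≠ 0 := by linarith
  have hT : ∀ s : ℝ, 1 < s → Continuous (fun x => |v x| ^ s) := fun s hs =>
    hv.abs.rpow_const fun x => Or.inr (by linarith)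
  have hfin : volume Ω ≠ ∞ := hΩb.measure_lt_top.ne
  have hfinT : volume (Ω ∩ S) ≠ ∞ := measure_ne_top_of_subset inter_subset_left hfin
  have : IsFiniteMeasure (volume.restrict (Ω ∩ S)) := ⟨by simpa using hfinT.lt_top⟩
  have hI : ∀ s : ℝ, 1 < s → IntegrableOn (fun x => |v x| ^ s) Ω := fun s hs =>
    ((hT s hs).continuousOn.integrableOn_compact hΩb.isCompact_closure).mono_set subset_closure
  have e1 : ∀ s : ℝ, 1 < s → ∫ x in Ω, |v x| ^ s = ∫ x in Ω ∩ S, |v x| ^ s := by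
    intro s hs
    refine setIntegral_eq_of_subset_of_forall_sdiff_eq_zero hΩo.measurableSet inter_subset_left ?_
    rintro x ⟨hx, hx'⟩
    have : x ∉ S := fun h => hx' ⟨hx, h⟩
    rw [h0 x this]; simp [Real.zero_rpow (by linarith : s ≠ 0)]
  rw [e1 p hp, e1 q (by linarith)]
  have hlt : p / q < 1 := (div_lt_one (by linarith)).2 hpq
  have hconj : (q / p).HolderConjugate (1 - p / q)⁻¹ := by
    rw [Real.holderConjugate_iff]
    refine ⟨(one_lt_div (by linarith)).2 hpq, ?_⟩
    simp
  obtain ⟨C, hC⟩ : ∃ C, ∀ x ∈ closure Ω, ‖|v x| ^ p‖ ≤ C :=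
    hΩb.isCompact_closure.exists_bound_of_continuousOn (hT p hp).continuousOn
  have hm : MemLp (fun x => |v x| ^ p) (ENNReal.ofReal (q / p)) (volume.restrict (Ω ∩ S)) := by
    refine MemLp.of_bound (hT p hp).aestronglyMeasurable C ?_
    filter_upwards [ae_restrict_mem (hΩo.measurableSet.inter hSm)] with x hx
    exact hC x (subset_closure hx.1)
  have hH := integral_mul_le_Lp_mul_Lq_of_nonneg (μ := volume.restrict (Ω ∩ S)) hconj
    (f := fun x => |v x| ^ p) (g := fun _ => (1:ℝ))
    (Filter.Eventually.of_forall fun x => by positivity)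
    (Filter.Eventually.of_forall fun x => by simp) hm (memLp_const 1)
  have e2 : ∀ x, (|v x| ^ p) ^ (q / p) = |v x| ^ q := by
    intro x
    rw [← Real.rpow_mul (abs_nonneg _)]
    congr 1; field_simp
  simp only [mul_one, e2, Real.one_rpow, integral_const, smul_eq_mul, one_div, inv_inv, inv_div] at hH
  rw [mul_comm]
  simpa [Measure.real] using hH

theorem F_integrable {N : ℕ} {q : ℝ} (hq : 1 < q) {Ω : Set (EE N)}
    (hΩb : Bornology.IsBounded Ω) (v : EE N → ℝ) (hv : Continuous v) :
    IntegrableOn (fun x => |v x| ^ (q - 2) * v x) Ω := by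
  have hc : Continuous (fun x => |v x| ^ (q - 1)) :=
    hv.abs.rpow_const fun x => Or.inr (by linarith)
  have hI : IntegrableOn (fun x => |v x| ^ (q - 1)) Ω :=
    (hc.continuousOn.integrableOn_compact hΩb.isCompact_closure).mono_set subset_closure
  refine Integrable.mono' hI ?_ (Filter.Eventually.of_forall fun x => ?_)
  · have := hv.measurable
    exact Measurable.aestronglyMeasurable (by fun_prop)
  · rw [norm_mul, Real.norm_of_nonneg (by positivity), Real.norm_eq_abs,
      ← Real.rpow_add_one' (abs_nonneg _) (by linarith)]
    apply le_of_eq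
    congr 1
    ring

/-- The test function estimate. -/
theorem mu_le {N : ℕ} [Nontrivial (EE N)] {p q Λ : ℝ} (hp : 1 < p) (hpq : p < q) (hΛ : 0 ≤ Λ)
    {Ω : Set (EE N)} (hΩo : IsOpen Ω) (hΩb : Bornology.IsBounded Ω) (hΩc : Convex ℝ Ω)
    {x₀ x₁ : EE N} (h0 : x₀ ∈ closure Ω) (h1 : x₁ ∈ closure Ω) (hd : 0 < dist x₀ x₁)
    (w : EE N → ℝ) (hw : ContDiff ℝ 1 w) (hcs : HasCompactSupport w)
    (hs : tsupport w ⊆ ball 0 (dist x₀ x₁ / 2))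
    (hlt : ∫ x, ‖fderiv ℝ w x‖ ^ p < Λ * ∫ x, |w x| ^ p) :
    muPQ p q Ω ≤ Λ *
      (volume (Ω ∩ (ball x₀ (dist x₀ x₁ / 2) ∪ ball x₁ (dist x₀ x₁ / 2)))).toReal ^ (1 - p / q) := by
  have hp0 : p ≠ 0 := by linarith
  have hq1 : 1 < q := by linarith
  have hq0 : q ≠ 0 := by linarith
  set d := dist x₀ x₁ with hdd
  obtain ⟨φ, ψ, ρ₀, R', L, hR', hL, hφ0, ⟨t, ht, hφt⟩, hψm, hψ0, -, hder, hab⟩ :=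
    exists_profile hp hΛ (by linarith) w hw hcs hs hlt
  have htR : t < R' := by
    by_contra! h
    exact hφt (hφ0 t h)
  obtain ⟨hu0L, hu0I, hu0⟩ := radial_test hp hΛ φ ψ ρ₀ L hL hψm hder hab Ω hΩo hΩb hΩc x₀ h0
  obtain ⟨hu1L, hu1I, hu1⟩ := radial_test hp hΛ φ ψ ρ₀ L hL hψm hder hab Ω hΩo hΩb hΩc x₁ h1
  set u₀ : EE N → ℝ := fun x => φ ‖x - x₀‖ with hu₀
  set u₁ : EE N → ℝ := fun x => φ ‖x - x₁‖ with hu₁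
  have hcu0 : Continuous u₀ := hu0L.continuous
  have hcu1 : Continuous u₁ := hu1L.continuous
  obtain ⟨α, β, hαβ, hsum⟩ := choose_coeffs hq1 (∫ x in Ω, |u₀ x| ^ (q - 2) * u₀ x)
    (∫ x in Ω, |u₁ x| ^ (q - 2) * u₁ x)
  set v : EE N → ℝ := fun x => α * u₀ x + β * u₁ x with hv
  have hcv : Continuous v := by fun_prop
  have hfar : ∀ x, R' < ‖x - x₀‖ ∨ R' < ‖x - x₁‖ := by
    intro x
    by_contra! hcon
    have := dist_triangle x₀ x x₁
    rw [dist_comm x₀ x, dist_eq_norm x, dist_eq_norm x, ← hdd] at this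
    linarith [hcon.1, hcon.2]
  have hu0z : ∀ x, R' ≤ ‖x - x₀‖ → u₀ x = 0 := fun x hx => hφ0 _ hx
  have hu1z : ∀ x, R' ≤ ‖x - x₁‖ → u₁ x = 0 := fun x hx => hφ0 _ hx
  have hz : ∀ x, u₀ x = 0 ∨ u₁ x = 0 := fun x =>
    (hfar x).imp (fun h => hu0z x h.le) (fun h => hu1z x h.le)
  have habs : ∀ s : ℝ, s ≠ 0 → ∀ x, |v x| ^ s = |α| ^ s * |u₀ x| ^ s + |β| ^ s * |u₁ x| ^ s := by
    intro s hs x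
    rw [← Real.mul_rpow (abs_nonneg _) (abs_nonneg _), ← Real.mul_rpow (abs_nonneg _) (abs_nonneg _),
      ← abs_mul, ← abs_mul]
    rcases hz x with h | h <;> simp [hv, h, Real.zero_rpow hs]
  have hF : ∀ x, |v x| ^ (q - 2) * v x = (|α| ^ (q - 2) * α) * (|u₀ x| ^ (q - 2) * u₀ x) +
      (|β| ^ (q - 2) * β) * (|u₁ x| ^ (q - 2) * u₁ x) := by
    intro x
    rw [← F_mul, ← F_mul]
    rcases hz x with h | h <;> simp [hv, h]
  have hfd : ∀ x, ‖fderiv ℝ v x‖ ^ p ≤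
      |α| ^ p * ‖fderiv ℝ u₀ x‖ ^ p + |β| ^ p * ‖fderiv ℝ u₁ x‖ ^ p := by
    intro x
    rcases hfar x with h | h
    · have he : v =ᶠ[𝓝 x] β • u₁ := by
        have hopen : IsOpen {y : EE N | R' < ‖y - x₀‖} := isOpen_lt continuous_const (by fun_prop)
        filter_upwards [hopen.mem_nhds h] with y hy
        simp [hv, hu0z y (le_of_lt hy)]
      rw [he.fderiv_eq, fderiv_const_smul_field, Pi.smul_apply, norm_smul,
        Real.mul_rpow (norm_nonneg _) (norm_nonneg _), Real.norm_eq_abs]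
      have : 0 ≤ |α| ^ p * ‖fderiv ℝ u₀ x‖ ^ p := by positivity
      linarith
    · have he : v =ᶠ[𝓝 x] α • u₀ := by
        have hopen : IsOpen {y : EE N | R' < ‖y - x₁‖} := isOpen_lt continuous_const (by fun_prop)
        filter_upwards [hopen.mem_nhds h] with y hy
        simp [hv, hu1z y (le_of_lt hy)]
      rw [he.fderiv_eq, fderiv_const_smul_field, Pi.smul_apply, norm_smul,
        Real.mul_rpow (norm_nonneg _) (norm_nonneg _), Real.norm_eq_abs]
      have : 0 ≤ |β| ^ p * ‖fderiv ℝ u₁ x‖ ^ p := by positivity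
      linarith
  -- nontriviality
  have hne : ∃ x ∈ Ω, v x ≠ 0 := by
    rcases hαβ with h | h
    · obtain ⟨x, hx, hxt⟩ := exists_at_dist hΩc h0 h1 ht (by linarith)
      refine ⟨x, hx, ?_⟩
      have hx1 : u₁ x = 0 := hu1z x ((hfar x).resolve_left (by rw [hxt]; linarith)).le
      have hx0 : u₀ x = φ t := by simp only [hu₀, hxt]
      simp [hv, hx1, hx0, h, hφt]
    · obtain ⟨x, hx, hxt⟩ := exists_at_dist hΩc h1 h0 ht (by rw [dist_comm]; linarith)
      refine ⟨x, hx, ?_⟩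
      have hx1 : u₀ x = 0 := hu0z x ((hfar x).resolve_right (by rw [hxt]; linarith)).le
      have hx0 : u₁ x = φ t := by simp only [hu₁, hxt]
      simp [hv, hx1, hx0, h, hφt]
  have hzero : ∫ x in Ω, |v x| ^ (q - 2) * v x = 0 := by
    simp only [hF]
    rw [integral_add ((F_integrable hq1 hΩb u₀ hcu0).const_mul _)
      ((F_integrable hq1 hΩb u₁ hcu1).const_mul _), integral_const_mul, integral_const_mul]
    exact hsum
  have hIabs : ∀ u : EE N → ℝ, Continuous u → IntegrableOn (fun x => |u x| ^ p) Ω := by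
    intro u hu
    have : Continuous (fun x => |u x| ^ p) := hu.abs.rpow_const fun x => Or.inr (by linarith)
    exact (this.continuousOn.integrableOn_compact hΩb.isCompact_closure).mono_set subset_closure
  have hnum : ∫ x in Ω, ‖fderiv ℝ v x‖ ^ p ≤ Λ * ∫ x in Ω, |v x| ^ p := by
    have e1 : ∫ x in Ω, |v x| ^ p =
        |α| ^ p * (∫ x in Ω, |u₀ x| ^ p) + |β| ^ p * ∫ x in Ω, |u₁ x| ^ p := by
      simp only [habs p hp0]
      rw [integral_add ((hIabs u₀ hcu0).const_mul _) ((hIabs u₁ hcu1).const_mul _),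
        integral_const_mul, integral_const_mul]
    have e2 : ∫ x in Ω, ‖fderiv ℝ v x‖ ^ p ≤ ∫ x in Ω,
        (|α| ^ p * ‖fderiv ℝ u₀ x‖ ^ p + |β| ^ p * ‖fderiv ℝ u₁ x‖ ^ p) :=
      integral_mono_of_nonneg (Filter.Eventually.of_forall fun x => by positivity)
        ((hu0I.const_mul _).add (hu1I.const_mul _)) (Filter.Eventually.of_forall hfd)
    rw [integral_add (hu0I.const_mul _) (hu1I.const_mul _), integral_const_mul,
      integral_const_mul] at e2
    rw [e1]
    have a1 : 0 ≤ |α| ^ p := by positivity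
    have a2 : 0 ≤ |β| ^ p := by positivity
    nlinarith [mul_le_mul_of_nonneg_left hu0 a1, mul_le_mul_of_nonneg_left hu1 a2]
  have hS : ∀ x, x ∉ ball x₀ (d / 2) ∪ ball x₁ (d / 2) → v x = 0 := by
    intro x hx
    rw [mem_union, not_or, mem_ball, mem_ball, dist_eq_norm, dist_eq_norm] at hx
    have a1 := hu0z x (by linarith [hx.1])
    have a2 := hu1z x (by linarith [hx.2])
    simp [hv, a1, a2]
  have hH := holder_T hp hpq hΩo (measurableSet_ball.union measurableSet_ball) hΩb v hcv hS
  have hden := (int_pos hq1 hΩo hΩb v hcv hne).2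
  have hray : rayleighQuot p q Ω v ≤ Λ *
      (volume (Ω ∩ (ball x₀ (d / 2) ∪ ball x₁ (d / 2)))).toReal ^ (1 - p / q) := by
    rw [rayleighQuot, div_le_iff₀ (Real.rpow_pos_of_pos hden _), mul_assoc]
    exact hnum.trans (mul_le_mul_of_nonneg_left hH hΛ)
  refine le_trans (csInf_le ⟨0, ?_⟩ ⟨v, ‖α‖₊ * L + ‖β‖₊ * L, ?_, hne, hzero, rfl⟩) hray
  · rintro _ ⟨v, K, -, -, -, rfl⟩
    rw [rayleighQuot]
    exact div_nonneg (integral_nonneg fun x => by positivity)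
      (Real.rpow_nonneg (integral_nonneg fun x => by positivity) _)
  · refine LipschitzWith.lipschitzOnWith ?_
    exact ((lipschitzWith_smul α).comp hu0L).add ((lipschitzWith_smul β).comp hu1L)

theorem EE_diam_ball {N : ℕ} (hnt : Nontrivial (EE N)) (c : EE N) {r : ℝ} (hr : 0 < r) :
    2 * r ≤ diam (ball c r) := by
  rw [← Metric.diam_closure, closure_ball c hr.ne']
  obtain ⟨e, he⟩ := exists_norm_eq (EE N) hr.le
  have h1 : c + e ∈ closedBall c r := by simp [he]
  have h2 : c - e ∈ closedBall c r := by simp [he]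
  have h3 := dist_le_diam_of_mem isBounded_closedBall h1 h2
  have h4 : dist (c + e) (c - e) = 2 * r := by
    rw [dist_eq_norm]
    have : c + e - (c - e) = (2:ℝ) • e := by module
    rw [this, norm_smul, he]; simp
  linarith


/-- Remark 4.5, estimate. Let `1 < p < q < p*`. For every open bounded
convex set `Ω ⊂ ℝ^N` and every open ball `B ⊂ ℝ^N`,
`μ_{p,q}(Ω) < λ_p(B) · |Ω|^(1 - p/q) · (diam B / diam Ω)^p`. -/
theorem muPQ_lt_lambdaP_volume_diam {N : ℕ} (hN : 2 ≤ N) (p q : ℝ) (hp : 1 < p)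
    (hpq : p < q) (hq : ltCritical N p q)
    (Ω : Set (EuclideanSpace ℝ (Fin N))) (hΩo : IsOpen Ω)
    (hΩb : Bornology.IsBounded Ω) (hΩc : Convex ℝ Ω) (hΩne : Ω.Nonempty)
    (c : EuclideanSpace ℝ (Fin N)) (r : ℝ) (hr : 0 < r) :
    muPQ p q Ω < lambdaPQ p p (ball c r) * (volume Ω).toReal ^ (1 - p / q) *
      (diam (ball c r) / diam Ω) ^ p := by
  have hnt : Nontrivial (EE N) := EE_nontrivial hN
  obtain ⟨hd, x₀, h0, x₁, h1, hdist⟩ := exists_diam hΩo hΩb hΩne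
  obtain ⟨hl, hex⟩ := lambda_pos hN hp c hr
  have hV := vol_lt hN hΩo hΩb hΩc h0 h1 (by rw [hdist]; exact hd)
  have hdb : diam (ball c r) = 2 * r := by
    apply le_antisymm (diam_ball hr.le)
    exact EE_diam_ball hnt c hr
  set lam := lambdaPQ p p (ball c r) with hlam
  set θ := 1 - p / q with hθ
  have hθ0 : 0 < θ := by
    have : p / q < 1 := (div_lt_one (by linarith)).2 hpq
    linarith
  set a := (volume (Ω ∩ (ball x₀ (dist x₀ x₁ / 2) ∪ ball x₁ (dist x₀ x₁ / 2)))).toReal ^ θ with ha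
  set b := (volume Ω).toReal ^ θ with hb
  have hab : a < b := Real.rpow_lt_rpow ENNReal.toReal_nonneg hV hθ0
  have ha0 : 0 ≤ a := Real.rpow_nonneg ENNReal.toReal_nonneg _
  have hab0 : 0 < a + b := by linarith
  set l := lam * (2 * b / (a + b)) with hldef
  have hl1 : lam < l := by
    have : 1 < 2 * b / (a + b) := by rw [one_lt_div hab0]; linarith
    rw [hldef]; nlinarith
  have hl2 : l * a < lam * b := by
    have : 2 * b / (a + b) * a < b := by
      rw [div_mul_eq_mul_div, div_lt_iff₀ hab0]; nlinarith
    rw [hldef]; nlinarith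
  obtain ⟨v, hv, hcs, hs, hlt⟩ := hex l hl1
  have hsc : 0 < 2 * r / diam Ω := by positivity
  obtain ⟨w, hw, hwcs, hws, hwlt⟩ := scale_fun hsc c v hv hcs hs hlt
  have hrs : r / (2 * r / diam Ω) = dist x₀ x₁ / 2 := by
    rw [hdist]; field_simp
  rw [hrs] at hws
  have hmu := mu_le hp hpq (by positivity) hΩo hΩb hΩc h0 h1 (by rw [hdist]; exact hd)
    w hw hwcs hws hwlt
  refine hmu.trans_lt ?_
  rw [hdb]
  have hsp : 0 < (2 * r / diam Ω) ^ p := by positivity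
  calc l * (2 * r / diam Ω) ^ p * a = (l * a) * (2 * r / diam Ω) ^ p := by ring
    _ < _ := mul_lt_mul_of_pos_right hl2 hsp
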